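/- Let F be a field with char F = 3 and let H be the Highwater algebra over F. Then H is not finitely generated: for every finite subset S of H, the smallest subalgebra of H containing S is a proper subalgebra of H. -/

import Mathlib

/- STATEMENT 11: in characteristic 3 the Highwater algebra is not finitely generated:\nevery finite subset is contained in a proper subalgebra. -/

/-- The underlying vector space of the Highwater algebra: formal `F`-linear combinations
of basis elements `a_i` (`i : ℤ`, encoded `Sum.inl i`) and `s_j` (`j ≥ 1`, encoded
`Sum.inr (j - 1)`). -/
abbrev HW (F : Type*) [Field F] := (ℤ ⊕ ℕ) →₀ F

variable (F : Type*) [Field F]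

/-- The axis `a_i` of the Highwater algebra. -/
noncomputable def hwa (i : ℤ) : HW F := Finsupp.single (Sum.inl i) 1

/-- The element `s_j` of the Highwater algebra (`s_0 = 0`). -/
noncomputable def hws : ℕ → HW F
  | 0 => 0
  | j + 1 => Finsupp.single (Sum.inr j) 1

/-- Product of two basis elements of the Highwater algebra:
`a_i · a_k = (1/2)(a_i + a_k) + s_{|i-k|}`,
`a_i · s_j = -(3/4) a_i + (3/8)(a_{i-j} + a_{i+j}) + (3/2) s_j`,
`s_j · s_k = (3/4)(s_j + s_k) - (3/8)(s_{|j-k|} + s_{j+k})`. -/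
noncomputable def hwBM : ℤ ⊕ ℕ → ℤ ⊕ ℕ → HW F
  | Sum.inl i, Sum.inl k => ((1 : F) / 2) • (hwa F i + hwa F k) + hws F (i - k).natAbs
  | Sum.inl i, Sum.inr j =>
      (-(3 : F) / 4) • hwa F i
        + ((3 : F) / 8) • (hwa F (i - ((j : ℤ) + 1)) + hwa F (i + ((j : ℤ) + 1)))
        + ((3 : F) / 2) • hws F (j + 1)
  | Sum.inr j, Sum.inl i =>
      (-(3 : F) / 4) • hwa F i
        + ((3 : F) / 8) • (hwa F (i - ((j : ℤ) + 1)) + hwa F (i + ((j : ℤ) + 1)))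
        + ((3 : F) / 2) • hws F (j + 1)
  | Sum.inr j, Sum.inr k =>
      ((3 : F) / 4) • (hws F (j + 1) + hws F (k + 1))
        - ((3 : F) / 8) • (hws F ((j : ℤ) - (k : ℤ)).natAbs + hws F (j + k + 2))

/-- The multiplication of the Highwater algebra: the bilinear extension of `hwBM`. -/
noncomputable def hwMul (x y : HW F) : HW F :=
  x.sum fun i ci => y.sum fun j cj => (ci * cj) • hwBM F i j

/-- The indices of the basis elements `a_i` with `|i| ≤ N` and `s_j` with `j ≤ 2 * N + 1`. -/
def hwBox (N : ℕ) : Set (ℤ ⊕ ℕ) :=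
  {x | Sum.elim (fun i : ℤ => i.natAbs ≤ N) (fun j : ℕ => j ≤ 2 * N) x}

theorem hwa_mem_supported_hwBox {N : ℕ} {i : ℤ} (hi : i.natAbs ≤ N) :
    hwa F i ∈ Finsupp.supported F F (hwBox N) :=
  Finsupp.single_mem_supported F 1 hi

theorem hws_mem_supported_hwBox {N j : ℕ} (hj : j ≤ 2 * N + 1) :
    hws F j ∈ Finsupp.supported F F (hwBox N) := by
  cases j with
  | zero => exact Submodule.zero_mem _
  | succ j => exact Finsupp.single_mem_supported F 1 (show j ≤ 2 * N by omega)

/-- In characteristic 3 the only nonzero products of basis elements are the `a_i · a_k`, and these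
involve no index outside the box of `a_i` and `a_k`. -/
theorem hwBM_mem_supported_hwBox (h3 : (3 : F) = 0) {N : ℕ} {x y : ℤ ⊕ ℕ}
    (hx : x ∈ hwBox N) (hy : y ∈ hwBox N) :
    hwBM F x y ∈ Finsupp.supported F F (hwBox N) := by
  rcases x with i | j <;> rcases y with k | l
  · have hi : i.natAbs ≤ N := hx
    have hk : k.natAbs ≤ N := hy
    exact add_mem (Submodule.smul_mem _ _
      (add_mem (hwa_mem_supported_hwBox F hi) (hwa_mem_supported_hwBox F hk)))
      (hws_mem_supported_hwBox F (by omega))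
  all_goals simp [hwBM, h3]

theorem hwMul_mem_supported_hwBox (h3 : (3 : F) = 0) {N : ℕ} {x y : HW F}
    (hx : x ∈ Finsupp.supported F F (hwBox N)) (hy : y ∈ Finsupp.supported F F (hwBox N)) :
    hwMul F x y ∈ Finsupp.supported F F (hwBox N) :=
  Submodule.sum_mem _ fun _ hi => Submodule.sum_mem _ fun _ hj =>
    Submodule.smul_mem _ _ (hwBM_mem_supported_hwBox F h3 (hx hi) (hy hj))

/-- Every finite set of vectors is supported in a common box. -/
theorem exists_subset_supported_hwBox {S : Set (HW F)} (hS : S.Finite) :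
    ∃ N, S ⊆ Finsupp.supported F F (hwBox N) := by
  have hfin : (⋃ x ∈ S, (x.support : Set (ℤ ⊕ ℕ))).Finite :=
    hS.biUnion fun x _ => x.support.finite_toSet
  obtain ⟨N, hN⟩ := (hfin.image (Sum.elim Int.natAbs id)).bddAbove
  refine ⟨N, fun x hx b hb => ?_⟩
  have hle := hN (Set.mem_image_of_mem (Sum.elim Int.natAbs id) (Set.mem_biUnion hx hb))
  rcases b with i | j
  · exact hle
  · have hj : j ≤ N := hle
    exact show j ≤ 2 * N by omega

theorem supported_hwBox_ne_top (N : ℕ) : Finsupp.supported F F (hwBox N) ≠ ⊤ := by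
  intro h
  have hmem : Finsupp.single (Sum.inr (2 * N + 1)) (1 : F) ∈ Finsupp.supported F F (hwBox N) :=
    h ▸ Submodule.mem_top
  have hbox : Sum.inr (2 * N + 1) ∈ hwBox N := hmem (by simp)
  have hle : 2 * N + 1 ≤ 2 * N := hbox
  omega

theorem highwater_not_finitely_generated_char3 (h3 : ringChar F = 3) :
    ∀ S : Set (HW F), S.Finite →
      ∃ W : Submodule F (HW F), (∀ x ∈ W, ∀ y ∈ W, hwMul F x y ∈ W) ∧
        S ⊆ W ∧ W ≠ ⊤ := by
  intro S hS
  have h3F : (3 : F) = 0 := by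
    have h := ringChar.Nat.cast_ringChar (R := F)
    rw [h3] at h
    exact_mod_cast h
  obtain ⟨N, hN⟩ := exists_subset_supported_hwBox F hS
  exact ⟨Finsupp.supported F F (hwBox N),
    fun _ hx _ hy => hwMul_mem_supported_hwBox F h3F hx hy, hN, supported_hwBox_ne_top F N⟩
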